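/- (Fano-style accuracy upper bound for single-pass reasoning.) Let A, Y, W be random variables on a finite probability space with values in finite sets, with A taking values in a finite set 𝒜 with |𝒜| ≥ 2. Let g be a function from the value set of Y into 𝒜, set P_e = P(g(Y) ≠ A) and Acc = 1 − P_e, and define the information demand β = H(A | W) and the output capacity C = H(Y | W). Then h(Acc) + (1 − Acc) · log₂(|𝒜| − 1) ≥ β − C. -/

import Mathlib

open scoped Classical
open Finset

namespace InfoQA

variable {Ω : Type*} [Fintype Ω]

/-- Probability of an event under a pmf `p` on a finite sample space. -/
noncomputable def pr (p : Ω → ℝ) (S : Ω → Prop) : ℝ :=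
  ∑ ω, if S ω then p ω else 0

/-- Distribution of a random variable `X` under `p`. -/
noncomputable def distOf (p : Ω → ℝ) {α : Type*} (X : Ω → α) (a : α) : ℝ :=
  pr p (fun ω => X ω = a)

/-- Shannon entropy of a random variable (logarithm base 2). -/
noncomputable def H (p : Ω → ℝ) {α : Type*} [Fintype α] (X : Ω → α) : ℝ :=
  -∑ a, distOf p X a * Real.logb 2 (distOf p X a)

/-- Conditional entropy `H(X | Z) = H(X, Z) - H(Z)` (base 2). -/
noncomputable def condH (p : Ω → ℝ) {α β : Type*} [Fintype α] [Fintype β]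
    (X : Ω → α) (Z : Ω → β) : ℝ :=
  H p (fun ω => (X ω, Z ω)) - H p Z

/-- Conditional mutual information `I(X ; Y | Z) = H(X | Z) - H(X | (Y, Z))` (base 2). -/
noncomputable def condMI (p : Ω → ℝ) {α β γ : Type*} [Fintype α] [Fintype β] [Fintype γ]
    (X : Ω → α) (Y : Ω → β) (Z : Ω → γ) : ℝ :=
  condH p X Z - condH p X (fun ω => (Y ω, Z ω))

/-- Binary entropy function (base 2); `Real.logb 2 0 = 0`, so `binEnt 0 = binEnt 1 = 0`. -/
noncomputable def binEnt (x : ℝ) : ℝ :=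
  -(x * Real.logb 2 x) - (1 - x) * Real.logb 2 (1 - x)

end InfoQA

open InfoQA

/-!
The entropy `H(A | Z)` is the minimal expected logarithmic loss of predicting `A` from `Z`, so any
predictor `k(a | z)` bounds it from above (Gibbs' inequality). If `A` is guessed as `g(Z)` with
error probability `e`, predict it with weight `1 - e` on the guess and spread `e` evenly over the
other values: the expected loss is then exactly Fano's bound `h(e) + e log₂ (|𝒜| - 1)`. Taking
`Z = (Y, W)`, it remains to see that `H(A | Y, W) = β - I(A ; Y | W)` is at least `β - C`.
-/

namespace InfoQA

variable {Ω α β γ : Type*} [Fintype Ω]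

section Probability

variable {p : Ω → ℝ} {S T : Ω → Prop}

theorem pr_nonneg (hp : ∀ ω, 0 ≤ p ω) (S : Ω → Prop) : 0 ≤ pr p S :=
  sum_nonneg fun ω _ => ite_nonneg (hp ω) le_rfl

theorem pr_mono (hp : ∀ ω, 0 ≤ p ω) (hST : ∀ ω, S ω → T ω) : pr p S ≤ pr p T := by
  simp only [pr, ← sum_filter]
  exact sum_le_sum_of_subset_of_nonneg (monotone_filter_right _ fun ω _ => hST ω) fun ω _ _ => hp ω

theorem sum_mul_ite (p : Ω → ℝ) (S : Ω → Prop) (x y : ℝ) :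
    ∑ ω, p ω * (if S ω then x else y) = pr p S * x + pr p (fun ω => ¬ S ω) * y := by
  simp only [pr, sum_mul, ← sum_add_distrib]
  refine sum_congr rfl fun ω _ => ?_
  by_cases hω : S ω <;> simp [hω]

theorem pr_not (p : Ω → ℝ) (S : Ω → Prop) : pr p (fun ω => ¬ S ω) = ∑ ω, p ω - pr p S := by
  have htotal := sum_mul_ite p S 1 1
  simp only [ite_self, mul_one] at htotal
  exact eq_sub_of_add_eq' htotal.symm

theorem le_pr (hp : ∀ ω, 0 ≤ p ω) {ω : Ω} (hω : S ω) : p ω ≤ pr p S := by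
  rw [pr, ← sum_filter]
  exact single_le_sum (fun ω _ => hp ω) (mem_filter.mpr ⟨mem_univ ω, hω⟩)

theorem pr_ne_zero (hp : ∀ ω, 0 ≤ p ω) {ω : Ω} (hω : S ω) (hpω : p ω ≠ 0) : pr p S ≠ 0 :=
  (((hp ω).lt_of_ne' hpω).trans_le (le_pr hp hω)).ne'

theorem exists_ne_zero_of_pr_ne_zero (h : pr p S ≠ 0) : ∃ ω, S ω ∧ p ω ≠ 0 := by
  obtain ⟨ω, -, hω⟩ := exists_ne_zero_of_sum_ne_zero h
  exact ⟨ω, ite_ne_right_iff.mp hω⟩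

end Probability

section Distribution

variable [Fintype α]

theorem sum_distOf_mul (p : Ω → ℝ) (X : Ω → α) (f : α → ℝ) :
    ∑ a, distOf p X a * f a = ∑ ω, p ω * f (X ω) := by
  simp only [distOf, pr, sum_mul]
  rw [sum_comm]
  simp [ite_mul]

theorem sum_distOf (p : Ω → ℝ) (X : Ω → α) : ∑ a, distOf p X a = ∑ ω, p ω := by
  simpa using sum_distOf_mul p X fun _ => 1

theorem H_eq_neg_sum (p : Ω → ℝ) (X : Ω → α) :
    H p X = -∑ ω, p ω * Real.logb 2 (distOf p X (X ω)) := by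
  rw [H, sum_distOf_mul p X fun a => Real.logb 2 (distOf p X a)]

end Distribution

section Monotonicity

variable {p : Ω → ℝ} [Fintype α] [Fintype β] [Fintype γ]

theorem H_comp_le (hp : ∀ ω, 0 ≤ p ω) (X : Ω → α) (f : α → β) :
    H p (fun ω => f (X ω)) ≤ H p X := by
  rw [H_eq_neg_sum, H_eq_neg_sum, neg_le_neg_iff]
  refine sum_le_sum fun ω _ => ?_
  rcases (hp ω).eq_or_lt with hω | hω
  · simp [← hω]
  · have hle : distOf p X (X ω) ≤ distOf p (fun ω => f (X ω)) (f (X ω)) :=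
      pr_mono hp fun _ h => congrArg f h
    exact mul_le_mul_of_nonneg_left
      (Real.logb_le_logb_of_le one_lt_two (hω.trans_le (le_pr hp rfl)) hle) hω.le

theorem condMI_le_condH (hp : ∀ ω, 0 ≤ p ω) (X : Ω → α) (Y : Ω → β) (Z : Ω → γ) :
    condMI p X Y Z ≤ condH p Y Z := by
  have hmono : H p (fun ω => (X ω, Z ω)) ≤ H p (fun ω => (X ω, Y ω, Z ω)) :=
    H_comp_le hp (fun ω => (X ω, Y ω, Z ω)) fun x => (x.1, x.2.2)
  simp only [condMI, condH]
  linarith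

end Monotonicity

section Gibbs

theorem mul_log_sub_mul_log_le {x y : ℝ} (hx : 0 ≤ x) (hy : 0 ≤ y) (hxy : y = 0 → x = 0) :
    x * Real.log y - x * Real.log x ≤ y - x := by
  rcases hx.eq_or_lt with rfl | hx
  · simpa using hy
  · have hy : 0 < y := hy.lt_of_ne' fun h => hx.ne' (hxy h)
    have hlog := mul_le_mul_of_nonneg_left (Real.log_le_sub_one_of_pos (div_pos hy hx)) hx.le
    rwa [Real.log_div hy.ne' hx.ne', mul_sub, mul_sub, mul_div_cancel₀ _ hx.ne', mul_one] at hlog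

theorem sum_mul_log_le_sum_mul_log {ι : Type*} {s : Finset ι} {d q : ι → ℝ}
    (hd : ∀ i ∈ s, 0 ≤ d i) (hq : ∀ i ∈ s, 0 ≤ q i) (hdq : ∀ i ∈ s, q i = 0 → d i = 0)
    (hsum : ∑ i ∈ s, q i ≤ ∑ i ∈ s, d i) :
    ∑ i ∈ s, d i * Real.log (q i) ≤ ∑ i ∈ s, d i * Real.log (d i) := by
  have hterm := sum_le_sum fun i hi => mul_log_sub_mul_log_le (hd i hi) (hq i hi) (hdq i hi)
  rw [sum_sub_distrib, sum_sub_distrib] at hterm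
  linarith

variable {p : Ω → ℝ} [Fintype α] [Fintype β]

theorem H_le_crossEntropy (hp : ∀ ω, 0 ≤ p ω) (X : Ω → α) {q : α → ℝ} (hq : ∀ a, 0 ≤ q a)
    (hq_sum : ∑ a, q a ≤ ∑ ω, p ω) (hq_ne : ∀ ω, p ω ≠ 0 → q (X ω) ≠ 0) :
    H p X ≤ -∑ ω, p ω * Real.logb 2 (q (X ω)) := by
  have hsupp : ∀ a, q a = 0 → distOf p X a = 0 := by
    intro a hqa
    by_contra hda
    obtain ⟨ω, rfl, hpω⟩ := exists_ne_zero_of_pr_ne_zero hda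
    exact hq_ne ω hpω hqa
  rw [← sum_distOf_mul p X fun a => Real.logb 2 (q a), H, neg_le_neg_iff]
  simp only [Real.logb, ← mul_div_assoc, ← sum_div]
  refine div_le_div_of_nonneg_right ?_ (Real.log_nonneg one_le_two)
  exact sum_mul_log_le_sum_mul_log (fun _ _ => pr_nonneg hp _) (fun a _ => hq a)
    (fun a _ => hsupp a) (hq_sum.trans_eq (sum_distOf p X).symm)

theorem condH_le_crossEntropy (hp : ∀ ω, 0 ≤ p ω) (X : Ω → α) (Z : Ω → β) {k : β → α → ℝ}
    (hk : ∀ z x, 0 ≤ k z x) (hk_sum : ∀ z, ∑ x, k z x ≤ 1)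
    (hk_ne : ∀ ω, p ω ≠ 0 → k (Z ω) (X ω) ≠ 0) :
    condH p X Z ≤ -∑ ω, p ω * Real.logb 2 (k (Z ω) (X ω)) := by
  have hZ : ∀ z, 0 ≤ distOf p Z z := fun _ => pr_nonneg hp _
  have hZ_ne : ∀ ω, p ω ≠ 0 → distOf p Z (Z ω) ≠ 0 := fun _ => pr_ne_zero hp rfl
  have hjoint_sum : ∑ x : α × β, k x.2 x.1 * distOf p Z x.2 ≤ ∑ ω, p ω := by
    rw [Fintype.sum_prod_type_right, ← sum_distOf p Z]
    simp only [← sum_mul]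
    exact sum_le_sum fun z _ => mul_le_of_le_one_left (hZ z) (hk_sum z)
  have hgibbs := H_le_crossEntropy hp (fun ω => (X ω, Z ω))
    (fun x => mul_nonneg (hk x.2 x.1) (hZ x.2)) hjoint_sum
    fun ω hω => mul_ne_zero (hk_ne ω hω) (hZ_ne ω hω)
  have hchain : ∑ ω, p ω * Real.logb 2 (k (Z ω) (X ω) * distOf p Z (Z ω)) =
      ∑ ω, p ω * Real.logb 2 (k (Z ω) (X ω)) + ∑ ω, p ω * Real.logb 2 (distOf p Z (Z ω)) := by
    rw [← sum_add_distrib]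
    refine sum_congr rfl fun ω _ => ?_
    by_cases hω : p ω = 0
    · simp [hω]
    · rw [Real.logb_mul (hk_ne ω hω) (hZ_ne ω hω), mul_add]
  rw [condH, H_eq_neg_sum p Z]
  linarith

end Gibbs

section SymmetricChannel

variable [Fintype α]

/-- Transition probabilities of the `|α|`-ary symmetric channel with error probability `e`: the
input `b` is received unchanged with probability `1 - e`, and otherwise as a uniformly random other
letter. It is the predictor of `A` from the guess `b` for which Gibbs' inequality is Fano's. -/
noncomputable def symmetricChannel (e : ℝ) (b a : α) : ℝ :=
  if b = a then 1 - e else e / ((Fintype.card α : ℝ) - 1)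

theorem card_sub_one_pos [Nontrivial α] : (0 : ℝ) < (Fintype.card α : ℝ) - 1 :=
  sub_pos.mpr (Nat.one_lt_cast.mpr Fintype.one_lt_card)

theorem symmetricChannel_nonneg [Nontrivial α] {e : ℝ} (he₀ : 0 ≤ e) (he₁ : e ≤ 1) (b a : α) :
    0 ≤ symmetricChannel e b a :=
  ite_nonneg (sub_nonneg.mpr he₁) (div_nonneg he₀ card_sub_one_pos.le)

theorem sum_symmetricChannel [Nontrivial α] (e : ℝ) (b : α) :
    ∑ a, symmetricChannel e b a = 1 := by
  have hcard : (Fintype.card α : ℝ) - 1 ≠ 0 := card_sub_one_pos.ne'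
  have hsplit (a : α) : symmetricChannel e b a =
      (if b = a then 1 - e - e / ((Fintype.card α : ℝ) - 1) else 0) +
        e / ((Fintype.card α : ℝ) - 1) := by
    unfold symmetricChannel
    split_ifs <;> ring
  simp only [hsplit, sum_add_distrib, sum_ite_eq, mem_univ, if_true, sum_const, card_univ,
    nsmul_eq_mul]
  field_simp
  ring

end SymmetricChannel

section Fano

theorem binEnt_one_sub (x : ℝ) : binEnt (1 - x) = binEnt x := by
  simp only [binEnt, sub_sub_cancel]
  ring

theorem mul_logb_div {x y : ℝ} (b : ℝ) (hy : y ≠ 0) :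
    x * Real.logb b (x / y) = x * Real.logb b x - x * Real.logb b y := by
  rcases eq_or_ne x 0 with rfl | hx
  · simp
  · rw [Real.logb_div hx hy, mul_sub]

variable {p : Ω → ℝ} [Fintype α] [Fintype β]

theorem condH_le_binEnt_add_mul_logb [Nontrivial α] (hp : ∀ ω, 0 ≤ p ω) (hsum : ∑ ω, p ω = 1)
    (X : Ω → α) (Z : Ω → β) (g : β → α) :
    condH p X Z ≤ binEnt (pr p fun ω => g (Z ω) ≠ X ω) +
      (pr p fun ω => g (Z ω) ≠ X ω) * Real.logb 2 ((Fintype.card α : ℝ) - 1) := by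
  set e := pr p fun ω => g (Z ω) ≠ X ω with he
  have hcorrect : pr p (fun ω => g (Z ω) = X ω) = 1 - e := by
    rw [he, pr_not, hsum, sub_sub_cancel]
  have he₀ : 0 ≤ e := pr_nonneg hp _
  have he₁ : e ≤ 1 := sub_nonneg.mp (hcorrect ▸ pr_nonneg hp _)
  have hcard : (Fintype.card α : ℝ) - 1 ≠ 0 := card_sub_one_pos.ne'
  have hne : ∀ ω, p ω ≠ 0 → symmetricChannel e (g (Z ω)) (X ω) ≠ 0 := by
    intro ω hω
    unfold symmetricChannel
    split_ifs with h
    · exact hcorrect ▸ pr_ne_zero hp h hω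
    · exact div_ne_zero (pr_ne_zero hp h hω) hcard
  have hloss : ∑ ω, p ω * Real.logb 2 (symmetricChannel e (g (Z ω)) (X ω)) =
      (1 - e) * Real.logb 2 (1 - e) + e * Real.logb 2 (e / ((Fintype.card α : ℝ) - 1)) := by
    simp only [symmetricChannel, apply_ite (Real.logb 2), sum_mul_ite, hcorrect]
    rfl
  have hgibbs := condH_le_crossEntropy hp X Z (k := fun z => symmetricChannel e (g z))
    (fun z => symmetricChannel_nonneg he₀ he₁ (g z)) (fun z => (sum_symmetricChannel e (g z)).le)
    hne
  rw [hloss, mul_logb_div 2 hcard] at hgibbs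
  rw [binEnt]
  linarith

end Fano

end InfoQA

theorem fano_accuracy_upper_bound_general
    {Ω 𝒜 𝒴 𝒲 : Type*} [Fintype Ω] [Fintype 𝒜] [Fintype 𝒴] [Fintype 𝒲]
    (p : Ω → ℝ) (hp : ∀ ω, 0 ≤ p ω) (hsum : ∑ ω, p ω = 1)
    (hcard : 2 ≤ Fintype.card 𝒜)
    (A : Ω → 𝒜) (Y : Ω → 𝒴) (W : Ω → 𝒲) (g : 𝒴 → 𝒲 → 𝒜) :
    binEnt (1 - pr p (fun ω => g (Y ω) (W ω) ≠ A ω)) +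
        (1 - (1 - pr p (fun ω => g (Y ω) (W ω) ≠ A ω))) *
          Real.logb 2 ((Fintype.card 𝒜 : ℝ) - 1) ≥
      condH p A W - condH p Y W := by
  have : Nontrivial 𝒜 := Fintype.one_lt_card_iff_nontrivial.mp hcard
  rw [binEnt_one_sub, sub_sub_cancel, ge_iff_le]
  calc condH p A W - condH p Y W
      ≤ condH p A W - condMI p A Y W := sub_le_sub_left (condMI_le_condH hp A Y W) _
    _ = condH p A fun ω => (Y ω, W ω) := sub_sub_cancel _ _
    _ ≤ _ := condH_le_binEnt_add_mul_logb hp hsum A (fun ω => (Y ω, W ω)) fun z => g z.1 z.2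

/-- Fano-style accuracy upper bound for single-pass reasoning:
with `Acc = 1 − P_e`, `β = H(A | W)` and `C = H(Y | W)`,
`h(Acc) + (1 − Acc) · log₂(|𝒜| − 1) ≥ β − C`. -/
theorem fano_accuracy_upper_bound
    {Ω 𝒜 𝒴 𝒲 : Type*} [Fintype Ω] [Fintype 𝒜] [Fintype 𝒴] [Fintype 𝒲]
    (p : Ω → ℝ) (hp : ∀ ω, 0 ≤ p ω) (hsum : ∑ ω, p ω = 1)
    (hcard : 2 ≤ Fintype.card 𝒜)
    (A : Ω → 𝒜) (Y : Ω → 𝒴) (W : Ω → 𝒲) (g : 𝒴 → 𝒜) :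
    binEnt (1 - pr p (fun ω => g (Y ω) ≠ A ω)) +
        (1 - (1 - pr p (fun ω => g (Y ω) ≠ A ω))) * Real.logb 2 ((Fintype.card 𝒜 : ℝ) - 1) ≥
      condH p A W - condH p Y W :=
  fano_accuracy_upper_bound_general p hp hsum hcard A Y W fun y _ => g y
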